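/- Consider the diversity-preserving UCB algorithm run on a bandit problem ν whose arm distributions belong to D_{[0,1]}, where P is a finite polytope, at least one p ∈ Ext(P) satisfies Δ(p) > 0, and p★_min(ν) > 0. Let p★ be any optimal mixed action. Then the non-expected cumulative regret satisfies the weak high-probability bound P( Σ_{s=1}^t ⟨p★ − p_s, μ⟩ ≥ Δ·t/2 ) = O(1/t²) as t → ∞. -/

import Mathlib

/-!
The regret bound combines two concentration facts with the optimism of UCB.

For each arm `a`, the confidence interval `|μ̂_a(s) - μ_a| ≤ √(2 log s / N_a(s))` fails at time `s`
with probability at most `2 / s³` (`measure_confFail_le`): a Chernoff bound for the exponential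
supermartingale `exp (l ∑ 1{A_r = a} (Y_r - μ_a) - l² N_a / 8)`, for each possible value of
`N_a(s)`. Summed over the times `s ∈ [Δ t / 4, t]`, this is `O(1/t²)`.

When the intervals hold at time `r - 1`, optimism bounds the regret of round `r` by
`2 √(2 log t) ∑ a, p_r(a) / √(max {N_a(r-1), 1})`. Up to an event of probability `1/t²` per arm
(`measure_armFail_le`, an Azuma-type bound), the sum over `r ≤ t` of
`p_r(a) / √(max {N_a(r-1), 1})` exceeds the corresponding sum with `1{A_r = a}` in place of `p_r(a)`
by at most `2 √(2 t log t)`, and that sum is at most `3 √t` by a potential argument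
(`sum_weight_le`). Hence off the failure events the regret is at most `Δ t / 4 + 1 + O(√t log t)`,
which is below `Δ t / 2` for large `t`; small `t` are absorbed in the constant.

Conditional laws are used in the integrated form `setLIntegral_eq_of_condExp`, and the supermartingale
estimates are written as inequalities between `ℝ≥0∞`-valued integrals, so that no integrability
has to be tracked.
-/

open MeasureTheory Finset

noncomputable section

namespace DivBanditUCB

/-- The inner product `⟨p, q⟩ = ∑ a p_a q_a` on `ℝ^K`. -/
def dot {K : ℕ} (p q : Fin K → ℝ) : ℝ := ∑ a, p a * q a

/-- `N_a(t)`: the number of times arm `a` was pulled during rounds `1, …, t`. -/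
def pulls {Ω : Type*} {K : ℕ} (A : ℕ → Ω → Fin K) (a : Fin K) (t : ℕ) (ω : Ω) : ℕ :=
  ∑ s ∈ Finset.Icc 1 t, if A s ω = a then 1 else 0

/-- `μ̂_a(t)`: the empirical mean of the rewards obtained when arm `a` was played,
with the convention `μ̂_a(t) = 1` when `N_a(t) = 0`. -/
def empMean {Ω : Type*} {K : ℕ} (A : ℕ → Ω → Fin K) (Y : ℕ → Ω → ℝ) (a : Fin K) (t : ℕ)
    (ω : Ω) : ℝ :=
  if pulls A a t ω = 0 then 1
  else (∑ s ∈ Finset.Icc 1 t, if A s ω = a then Y s ω else 0) / (pulls A a t ω : ℝ)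

/-- The upper confidence bound `U_a(t) = μ̂_a(t) + sqrt(2 log t / max{N_a(t), 1})`,
with `U_a(0) = 1`. -/
def ucbIndex {Ω : Type*} {K : ℕ} (A : ℕ → Ω → Fin K) (Y : ℕ → Ω → ℝ) (a : Fin K) (t : ℕ)
    (ω : Ω) : ℝ :=
  if t = 0 then 1
  else empMean A Y a t ω + Real.sqrt (2 * Real.log t / (max (pulls A a t ω) 1 : ℕ))

/-- The σ-algebra generated by the history `A_1, Y_1, …, A_t, Y_t`. -/
def hist {Ω : Type*} {K : ℕ} (A : ℕ → Ω → Fin K) (Y : ℕ → Ω → ℝ) (t : ℕ) :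
    MeasurableSpace Ω :=
  ⨆ s ∈ Set.Icc 1 t,
    (MeasurableSpace.comap (A s) inferInstance ⊔ MeasurableSpace.comap (Y s) inferInstance)

open scoped ENNReal

/-! ### Conditional laws in integrated form -/

/-- If `q` is the conditional probability of `E` given `m`, then restricting to `E` and weighting
by `q` give the same integral for every nonnegative `m`-measurable integrand. -/
lemma setLIntegral_eq_of_condExp {Ω : Type*} {m mΩ : MeasurableSpace Ω}
    (hm : m ≤ mΩ) (P : Measure Ω) [IsProbabilityMeasure P] {E : Set Ω} (hE : MeasurableSet E)
    {q : Ω → ℝ} (hq0 : ∀ ω, 0 ≤ q ω)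
    (hq : P[E.indicator (fun _ => (1 : ℝ)) | m] =ᵐ[P] q)
    {g : Ω → ℝ≥0∞} (hg : Measurable[m] g) :
    ∫⁻ ω in E, g ω ∂P = ∫⁻ ω, g ω * ENNReal.ofReal (q ω) ∂P := by
  have hqi : Integrable q P := integrable_condExp.congr hq
  have hqm : AEMeasurable (fun ω => ENNReal.ofReal (q ω)) P := hqi.aemeasurable.ennreal_ofReal
  have hEi : Integrable (E.indicator (fun _ => (1 : ℝ))) P :=
    (integrable_const (1 : ℝ)).indicator hE
  have key : (P.restrict E).trim hm
      = (P.withDensity (fun ω => ENNReal.ofReal (q ω))).trim hm := by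
    refine @Measure.ext _ m _ _ (fun B hB => ?_)
    rw [trim_measurableSet_eq hm hB, trim_measurableSet_eq hm hB, Measure.restrict_apply (hm _ hB),
      withDensity_apply _ (hm _ hB),
      ← ofReal_integral_eq_lintegral_ofReal hqi.integrableOn (ae_of_all _ hq0)]
    have h1 : ∫ ω in B, q ω ∂P = ∫ ω in B, E.indicator (fun _ => (1 : ℝ)) ω ∂P := by
      rw [← setIntegral_condExp hm hEi hB]
      exact setIntegral_congr_ae (hm _ hB) (hq.mono fun ω h _ => h.symm)
    rw [h1, setIntegral_indicator hE]
    simp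
  rw [← lintegral_trim hm hg, key, lintegral_trim hm hg,
    lintegral_withDensity_eq_lintegral_mul₀ hqm (hg.mono hm le_rfl).aemeasurable]
  simp only [Pi.mul_apply, mul_comm]

/-- Hoeffding's lemma for a distribution on `[0,1]`. -/
lemma lintegral_exp_centered_le (ν : Measure ℝ) [IsProbabilityMeasure ν]
    (hsupp : ν (Set.Icc (0 : ℝ) 1)ᶜ = 0) (l : ℝ) :
    ∫⁻ y, ENNReal.ofReal (Real.exp (l * (y - ∫ x, x ∂ν) - l ^ 2 / 8)) ∂ν ≤ 1 := by
  have hb : ∀ᵐ y ∂ν, y ∈ Set.Icc (0 : ℝ) 1 := by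
    rw [ae_iff]; exact hsupp
  have h := ProbabilityTheory.hasSubgaussianMGF_of_mem_Icc (μ := ν) (X := fun y : ℝ => y)
    (a := 0) (b := 1) aemeasurable_id hb
  have hi := h.integrable_exp_mul l
  have hle := h.mgf_le l
  have e : ∀ y : ℝ, Real.exp (l * (y - ∫ x, x ∂ν) - l ^ 2 / 8)
      = Real.exp (l * (y - ∫ x, x ∂ν)) * Real.exp (-(l ^ 2 / 8)) := by
    intro y; rw [← Real.exp_add]; ring_nf
  rw [← ofReal_integral_eq_lintegral_ofReal]
  · simp_rw [e]
    rw [integral_mul_const, ← ENNReal.ofReal_one]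
    apply ENNReal.ofReal_le_ofReal
    have h2 : ∫ y, Real.exp (l * (y - ∫ x, x ∂ν)) ∂ν ≤ Real.exp (l ^ 2 / 8) := by
      refine hle.trans (le_of_eq ?_)
      congr 1
      simp
      ring
    calc _ ≤ Real.exp (l ^ 2 / 8) * Real.exp (-(l ^ 2 / 8)) := by gcongr
      _ = 1 := by rw [← Real.exp_add]; simp
  · simp_rw [e]
    exact hi.mul_const _
  · exact ae_of_all _ fun y => (Real.exp_pos _).le

/-! ### One-step exponential inequalities -/

/-- One step of the reward supermartingale: conditionally on the past and on the arm `B`, the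
reward `V` follows `ν_B`, so on `{B = a}` Hoeffding's lemma applies, and off it the increment
vanishes. -/
lemma lintegral_reward_step_le {Ω : Type*} {K : ℕ}
    {m mΩ : MeasurableSpace Ω} (hm : m ≤ mΩ) (P : Measure Ω) [IsProbabilityMeasure P]
    (ν : Fin K → Measure ℝ) (hνprob : ∀ a, IsProbabilityMeasure (ν a))
    (hνsupp : ∀ a, (ν a) (Set.Icc (0 : ℝ) 1)ᶜ = 0)
    {B : Ω → Fin K} {V : Ω → ℝ} (hB : Measurable[m] B) (hV : Measurable V)
    (hcond : ∀ s : Set ℝ, MeasurableSet s →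
      P[({ω | V ω ∈ s}).indicator (fun _ => (1 : ℝ)) | m]
        =ᵐ[P] fun ω => ((ν (B ω)) s).toReal)
    (a : Fin K) (l : ℝ) {g : Ω → ℝ≥0∞} (hg : Measurable[m] g) :
    ∫⁻ ω, g ω * ENNReal.ofReal (Real.exp
      (if B ω = a then l * (V ω - ∫ x, x ∂(ν a)) - l ^ 2 / 8 else 0)) ∂P ≤ ∫⁻ ω, g ω ∂P := by
  set h : ℝ → ℝ≥0∞ := fun y =>
    ENNReal.ofReal (Real.exp (l * (y - ∫ x, x ∂(ν a)) - l ^ 2 / 8)) with hh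
  have hhm : Measurable h := by rw [hh]; fun_prop
  set S : Set Ω := {ω | B ω = a} with hS
  have hSm : MeasurableSet[m] S := hB (measurableSet_singleton a)
  have hS' : MeasurableSet S := hm _ hSm
  set f : Ω → ℝ≥0∞ := S.indicator g with hf
  have hfm : Measurable[m] f := hg.indicator hSm
  have hfm' : Measurable f := hfm.mono hm le_rfl
  have hg' : Measurable g := hg.mono hm le_rfl
  -- under the density `g · 1{B = a}`, the law of `V` is a multiple of `ν a`
  have hmap : (P.withDensity f).map V = (∫⁻ ω, f ω ∂P) • ν a := by
    ext s hs
    rw [Measure.map_apply hV hs, withDensity_apply _ (hV hs), Measure.smul_apply, smul_eq_mul]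
    have := setLIntegral_eq_of_condExp hm P (hV hs) (q := fun ω => ((ν (B ω)) s).toReal)
      (fun ω => ENNReal.toReal_nonneg) (hcond s hs) hfm
    rw [this, ← lintegral_mul_const _ hfm']
    refine lintegral_congr fun ω => ?_
    by_cases hω : ω ∈ S
    · have : B ω = a := hω
      rw [this, ENNReal.ofReal_toReal (measure_ne_top _ _)]
    · simp [hf, hω]
  have h1 : ∫⁻ ω, f ω * h (V ω) ∂P ≤ ∫⁻ ω, f ω ∂P := by
    have e1 : ∫⁻ ω, f ω * h (V ω) ∂P = ∫⁻ y, h y ∂((P.withDensity f).map V) := by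
      rw [lintegral_map hhm hV,
        lintegral_withDensity_eq_lintegral_mul₀ hfm'.aemeasurable (g := fun ω => h (V ω))
          (hhm.comp hV).aemeasurable]
      rfl
    rw [e1, hmap, lintegral_smul_measure, smul_eq_mul]
    exact mul_le_of_le_one_right zero_le (lintegral_exp_centered_le (ν a) (hνsupp a) l)
  calc _ = ∫⁻ ω, (f ω * h (V ω) + Sᶜ.indicator g ω) ∂P := by
        refine lintegral_congr fun ω => ?_
        by_cases hω : ω ∈ S
        · have : B ω = a := hω
          simp [hf, hω, this, hh]
        · have : B ω ≠ a := hω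
          simp [hf, hω, this]
    _ = ∫⁻ ω, f ω * h (V ω) ∂P + ∫⁻ ω, Sᶜ.indicator g ω ∂P :=
        lintegral_add_left (hfm'.mul (hhm.comp hV)) _
    _ ≤ ∫⁻ ω, f ω ∂P + ∫⁻ ω, Sᶜ.indicator g ω ∂P := by gcongr
    _ = ∫⁻ ω, g ω ∂P := by
        rw [← lintegral_add_left hfm']
        refine lintegral_congr fun ω => ?_
        by_cases hω : ω ∈ S <;> simp [hf, hω]

/-- The centered Bernoulli exponential moment bound, via `exp x ≤ 1 + x + x²` on `[-1, 1]`. -/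
lemma bernoulli_exp_le {q θ l : ℝ} (hq0 : 0 ≤ q) (hq1 : q ≤ 1) (hθ0 : 0 ≤ θ) (hθl : θ ≤ l)
    (hl : l ≤ 1) :
    Real.exp (θ * (q - 1) - l ^ 2) * q + Real.exp (θ * q - l ^ 2) * (1 - q) ≤ 1 := by
  have b1 : Real.exp (θ * (q - 1)) ≤ 1 + θ * (q - 1) + (θ * (q - 1)) ^ 2 := by
    have := Real.abs_exp_sub_one_sub_id_le (x := θ * (q - 1))
      (abs_le.2 ⟨by nlinarith, by nlinarith⟩)
    linarith [(abs_le.1 this).2]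
  have b0 : Real.exp (θ * q) ≤ 1 + θ * q + (θ * q) ^ 2 := by
    have := Real.abs_exp_sub_one_sub_id_le (x := θ * q)
      (abs_le.2 ⟨by nlinarith, by nlinarith⟩)
    linarith [(abs_le.1 this).2]
  have h3 : Real.exp (θ * (q - 1)) * q + Real.exp (θ * q) * (1 - q) ≤ 1 + l ^ 2 := by
    have := mul_le_mul_of_nonneg_right b1 hq0
    have := mul_le_mul_of_nonneg_right b0 (sub_nonneg.2 hq1)
    have h4 : θ ^ 2 ≤ l ^ 2 := by gcongr
    have h5 : q * (1 - q) ≤ 1 := by nlinarith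
    nlinarith [mul_le_mul_of_nonneg_left h5 (sq_nonneg θ)]
  have h6 : 1 + l ^ 2 ≤ Real.exp (l ^ 2) := by linarith [Real.add_one_le_exp (l ^ 2)]
  have e1 : Real.exp (θ * (q - 1) - l ^ 2) = Real.exp (θ * (q - 1)) * Real.exp (-l ^ 2) := by
    rw [← Real.exp_add]; ring_nf
  have e0 : Real.exp (θ * q - l ^ 2) = Real.exp (θ * q) * Real.exp (-l ^ 2) := by
    rw [← Real.exp_add]; ring_nf
  calc _ = (Real.exp (θ * (q - 1)) * q + Real.exp (θ * q) * (1 - q)) * Real.exp (-l ^ 2) := by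
        rw [e1, e0]; ring
    _ ≤ Real.exp (l ^ 2) * Real.exp (-l ^ 2) := by gcongr; linarith
    _ = 1 := by rw [← Real.exp_add]; simp

/-- One step of the arm-sampling supermartingale: `q` is the conditional probability of `E` and
`X ∈ [0,1]` a predictable weight. -/
lemma lintegral_arm_step_le {Ω : Type*} {m mΩ : MeasurableSpace Ω}
    (hm : m ≤ mΩ) (P : Measure Ω) [IsProbabilityMeasure P]
    {E : Set Ω} (hE : MeasurableSet E) {q X : Ω → ℝ} (hqm : Measurable[m] q)
    (hXm : Measurable[m] X)
    (hq0 : ∀ ω, 0 ≤ q ω) (hq1 : ∀ ω, q ω ≤ 1) (hX0 : ∀ ω, 0 ≤ X ω) (hX1 : ∀ ω, X ω ≤ 1)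
    (hq : P[E.indicator (fun _ => (1 : ℝ)) | m] =ᵐ[P] q)
    {l : ℝ} (hl0 : 0 ≤ l) (hl1 : l ≤ 1) {g : Ω → ℝ≥0∞} (hg : Measurable[m] g) :
    ∫⁻ ω, g ω * ENNReal.ofReal (Real.exp
      (l * (X ω * (q ω - E.indicator (fun _ => (1 : ℝ)) ω)) - l ^ 2)) ∂P ≤ ∫⁻ ω, g ω ∂P := by
  have hqc : P[Eᶜ.indicator (fun _ => (1 : ℝ)) | m] =ᵐ[P] fun ω => 1 - q ω := by
    have e : Eᶜ.indicator (fun _ => (1 : ℝ)) = (fun _ => (1 : ℝ)) - E.indicator (fun _ => 1) := by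
      ext ω; by_cases hω : ω ∈ E <;> simp [hω]
    rw [e]
    refine (condExp_sub (integrable_const _) ((integrable_const (1 : ℝ)).indicator hE) m).trans ?_
    filter_upwards [hq] with ω hω
    simp [hω, condExp_const hm]
  set e1 : Ω → ℝ≥0∞ := fun ω => ENNReal.ofReal (Real.exp ((l * X ω) * (q ω - 1) - l ^ 2)) with he1
  set e0 : Ω → ℝ≥0∞ := fun ω => ENNReal.ofReal (Real.exp ((l * X ω) * q ω - l ^ 2)) with he0
  have he1m : Measurable[m] e1 := by
    rw [he1]
    exact (Real.measurable_exp.comp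
      (((hXm.const_mul l).mul (hqm.sub_const 1)).sub_const _)).ennreal_ofReal
  have he0m : Measurable[m] e0 := by
    rw [he0]
    exact (Real.measurable_exp.comp
      (((hXm.const_mul l).mul hqm).sub_const _)).ennreal_ofReal
  rw [← lintegral_add_compl _ hE]
  have i1 : ∫⁻ ω in E, g ω * ENNReal.ofReal (Real.exp
      (l * (X ω * (q ω - E.indicator (fun _ => (1 : ℝ)) ω)) - l ^ 2)) ∂P
      = ∫⁻ ω, g ω * e1 ω * ENNReal.ofReal (q ω) ∂P := by
    rw [← setLIntegral_eq_of_condExp hm P hE hq0 hq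
      (g := fun ω => g ω * e1 ω) (hg.mul he1m)]
    refine setLIntegral_congr_fun hE fun ω hω => ?_
    simp only [he1, hω, Set.indicator_of_mem, mul_assoc]
  have i0 : ∫⁻ ω in Eᶜ, g ω * ENNReal.ofReal (Real.exp
      (l * (X ω * (q ω - E.indicator (fun _ => (1 : ℝ)) ω)) - l ^ 2)) ∂P
      = ∫⁻ ω, g ω * e0 ω * ENNReal.ofReal (1 - q ω) ∂P := by
    rw [← setLIntegral_eq_of_condExp hm P hE.compl (fun ω => sub_nonneg.2 (hq1 ω)) hqc
      (g := fun ω => g ω * e0 ω) (hg.mul he0m)]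
    refine setLIntegral_congr_fun hE.compl fun ω hω => ?_
    simp only [he0, Set.indicator_of_notMem hω, mul_assoc, sub_zero]
  rw [i1, i0, ← lintegral_add_left
    (f := fun ω => g ω * e1 ω * ENNReal.ofReal (q ω)) (((hg.mul he1m).mono hm le_rfl).mul (hqm.mono hm le_rfl).ennreal_ofReal)]
  refine lintegral_mono fun ω => ?_
  simp only [he1, he0, mul_assoc]
  rw [← mul_add, ← ENNReal.ofReal_mul (Real.exp_pos _).le, ← ENNReal.ofReal_mul (Real.exp_pos _).le,
    ← ENNReal.ofReal_add (mul_nonneg (Real.exp_pos _).le (hq0 ω))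
      (mul_nonneg (Real.exp_pos _).le (sub_nonneg.2 (hq1 ω)))]
  refine mul_le_of_le_one_right zero_le (ENNReal.ofReal_le_one.2 ?_)
  have := bernoulli_exp_le (hq0 ω) (hq1 ω) (mul_nonneg hl0 (hX0 ω))
    (mul_le_of_le_one_right hl0 (hX1 ω)) hl1
  simpa only [mul_assoc] using this

/-! ### Chernoff bound for exponential supermartingales -/

/-- If each `exp (Z (s+1))` has conditional expectation at most `1` given `F s` (in integrated
form), then the sum of the `Z s` exceeds `u` with probability at most `exp (-u)`. -/
lemma measure_sum_ge_le {Ω : Type*} {mΩ : MeasurableSpace Ω} (P : Measure Ω)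
    [IsProbabilityMeasure P] (F : ℕ → MeasurableSpace Ω) (hF : Monotone F) (hFm : ∀ s, F s ≤ mΩ)
    (Z : ℕ → Ω → ℝ) (hZ : ∀ s, 1 ≤ s → Measurable[F s] (Z s))
    (hstep : ∀ s, ∀ g : Ω → ℝ≥0∞, Measurable[F s] g →
      ∫⁻ ω, g ω * ENNReal.ofReal (Real.exp (Z (s + 1) ω)) ∂P ≤ ∫⁻ ω, g ω ∂P)
    (t : ℕ) (u : ℝ) :
    P {ω | u ≤ ∑ s ∈ Finset.Icc 1 t, Z s ω} ≤ ENNReal.ofReal (Real.exp (-u)) := by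
  have hmeas : ∀ n, Measurable[F n]
      (fun ω => ENNReal.ofReal (Real.exp (∑ s ∈ Finset.Icc 1 n, Z s ω))) := by
    intro n
    have : Measurable[F n] (fun ω => ∑ s ∈ Finset.Icc 1 n, Z s ω) := by
      refine Finset.measurable_sum _ fun s hs => ?_
      rw [Finset.mem_Icc] at hs
      exact (hZ s hs.1).mono (hF hs.2) le_rfl
    exact (Real.measurable_exp.comp this).ennreal_ofReal
  have hle : ∀ n, ∫⁻ ω, ENNReal.ofReal (Real.exp (∑ s ∈ Finset.Icc 1 n, Z s ω)) ∂P ≤ 1 := by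
    intro n
    induction n with
    | zero => simp
    | succ n ih =>
      refine le_trans (le_of_eq ?_) ((hstep n _ (hmeas n)).trans ih)
      refine lintegral_congr fun ω => ?_
      rw [Finset.sum_Icc_succ_top (by omega), Real.exp_add,
        ENNReal.ofReal_mul (Real.exp_pos _).le]
  have hmk := mul_meas_ge_le_lintegral (μ := P) ((hmeas t).mono (hFm t) le_rfl)
    (ENNReal.ofReal (Real.exp u))
  have hset : {ω | ENNReal.ofReal (Real.exp u)
      ≤ ENNReal.ofReal (Real.exp (∑ s ∈ Finset.Icc 1 t, Z s ω))}
      = {ω | u ≤ ∑ s ∈ Finset.Icc 1 t, Z s ω} := by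
    ext ω
    simp only [Set.mem_ofPred_eq]
    rw [ENNReal.ofReal_le_ofReal_iff (Real.exp_pos _).le, Real.exp_le_exp]
  rw [hset] at hmk
  calc P {ω | u ≤ ∑ s ∈ Finset.Icc 1 t, Z s ω}
      = ENNReal.ofReal (Real.exp (-u)) * (ENNReal.ofReal (Real.exp u)
          * P {ω | u ≤ ∑ s ∈ Finset.Icc 1 t, Z s ω}) := by
        rw [← mul_assoc, ← ENNReal.ofReal_mul (Real.exp_pos _).le, ← Real.exp_add]; simp
    _ ≤ ENNReal.ofReal (Real.exp (-u)) * 1 := by gcongr; exact hmk.trans (hle t)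
    _ = _ := mul_one _

/-! ### The history filtration -/

section History

variable {Ω : Type*} {K : ℕ} {A : ℕ → Ω → Fin K} {Y : ℕ → Ω → ℝ}

lemma hist_mono : Monotone (hist A Y) := by
  intro s t hst
  exact biSup_mono fun r hr => ⟨hr.1, hr.2.trans hst⟩

lemma hist_le [mΩ : MeasurableSpace Ω] (hA : ∀ t, Measurable (A t)) (hY : ∀ t, Measurable (Y t))
    (t : ℕ) : hist A Y t ≤ mΩ :=
  iSup₂_le fun r _ => sup_le (hA r).comap_le (hY r).comap_le

lemma measurable_arm_hist {s t : ℕ} (hs : 1 ≤ s) (hst : s ≤ t) : Measurable[hist A Y t] (A s) := by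
  rw [measurable_iff_comap_le]
  exact le_sup_left.trans (le_iSup₂_of_le s ⟨hs, hst⟩ le_rfl)

lemma measurable_reward_hist {s t : ℕ} (hs : 1 ≤ s) (hst : s ≤ t) :
    Measurable[hist A Y t] (Y s) := by
  rw [measurable_iff_comap_le]
  exact le_sup_right.trans (le_iSup₂_of_le s ⟨hs, hst⟩ le_rfl)

lemma measurableSet_arm_hist {s t : ℕ} (hs : 1 ≤ s) (hst : s ≤ t) (a : Fin K) :
    MeasurableSet[hist A Y t] {ω | A s ω = a} :=
  measurable_arm_hist hs hst (measurableSet_singleton a)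

/-- The exploration weight `1 / √(max {N_a(t), 1})`. -/
def weight (A : ℕ → Ω → Fin K) (a : Fin K) (t : ℕ) (ω : Ω) : ℝ :=
  1 / Real.sqrt (max (pulls A a t ω) 1 : ℕ)

lemma weight_nonneg (a : Fin K) (t : ℕ) (ω : Ω) : 0 ≤ weight A a t ω := by
  unfold weight; positivity

lemma weight_le_one (a : Fin K) (t : ℕ) (ω : Ω) : weight A a t ω ≤ 1 := by
  unfold weight
  rw [div_le_one (Real.sqrt_pos.2 (by positivity)), Real.one_le_sqrt]
  exact_mod_cast le_max_right _ _

lemma measurable_weight (a : Fin K) (t : ℕ) : Measurable[hist A Y t] (weight A a t) := by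
  have h : Measurable[hist A Y t] (pulls A a t) := by
    refine Finset.measurable_sum _ fun s hs => ?_
    rw [Finset.mem_Icc] at hs
    exact Measurable.ite (measurableSet_arm_hist hs.1 hs.2 a) measurable_const measurable_const
  exact (measurable_from_top (f := fun n : ℕ => 1 / Real.sqrt (max n 1 : ℕ))).comp h

lemma pulls_succ (a : Fin K) (t : ℕ) (ω : Ω) :
    pulls A a (t + 1) ω = pulls A a t ω + if A (t + 1) ω = a then 1 else 0 := by
  unfold pulls
  rw [Finset.sum_Icc_succ_top (by omega)]

lemma pulls_le (a : Fin K) (t : ℕ) (ω : Ω) : pulls A a t ω ≤ t := by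
  induction t with
  | zero => simp [pulls]
  | succ t ih => rw [pulls_succ]; split_ifs <;> omega

/-- The potential argument: along the pulls of `a`, the weights run through
`1, 1, 1/√2, 1/√3, …`, whose partial sums are `O(√N_a(t))`. -/
lemma sum_weight_le (a : Fin K) (t : ℕ) (ω : Ω) :
    ∑ s ∈ Finset.Icc 1 t, weight A a (s - 1) ω * ({ω | A s ω = a}).indicator (fun _ => (1 : ℝ)) ω
      ≤ 3 * Real.sqrt t := by
  have key : ∀ n : ℕ, 1 / Real.sqrt (max n 1 : ℕ) ≤ 3 * Real.sqrt (n + 1 : ℕ) - 3 * Real.sqrt n := by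
    intro n
    rcases Nat.eq_zero_or_pos n with rfl | hn
    · simp
    · have h1 : (1 : ℝ) ≤ n := by exact_mod_cast hn
      rw [max_eq_left hn, div_le_iff₀ (Real.sqrt_pos.2 (by linarith))]
      push_cast
      set x := Real.sqrt n
      set y := Real.sqrt (n + 1 : ℝ)
      have hx : x ^ 2 = n := Real.sq_sqrt (by linarith)
      have hy : y ^ 2 = n + 1 := Real.sq_sqrt (by linarith)
      have hx0 : 0 ≤ x := Real.sqrt_nonneg _
      have hy0 : 0 ≤ y := Real.sqrt_nonneg _
      have hyx : y ≤ 2 * x := by nlinarith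
      have hxy : x ≤ y := by nlinarith
      nlinarith
  have main : ∑ s ∈ Finset.Icc 1 t,
      weight A a (s - 1) ω * ({ω | A s ω = a}).indicator (fun _ => (1 : ℝ)) ω
      ≤ 3 * Real.sqrt (pulls A a t ω) := by
    induction t with
    | zero => simp
    | succ t ih =>
      rw [Finset.sum_Icc_succ_top (by omega), pulls_succ, Nat.add_sub_cancel]
      by_cases h : A (t + 1) ω = a
      · have := key (pulls A a t ω)
        simp only [h, if_true, Set.indicator, Set.mem_ofPred_eq, mul_one] at *
        unfold weight at *
        linarith
      · simpa [h, Set.indicator] using ih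
  exact main.trans (by gcongr; exact pulls_le a t ω)

/-- The centered cumulative reward of arm `a`. -/
def centered (A : ℕ → Ω → Fin K) (Y : ℕ → Ω → ℝ) (c : ℝ) (a : Fin K) (t : ℕ) (ω : Ω) : ℝ :=
  ∑ s ∈ Finset.Icc 1 t, if A s ω = a then Y s ω - c else 0

lemma centered_eq (c : ℝ) (a : Fin K) (t : ℕ) (ω : Ω) :
    centered A Y c a t ω
      = (∑ s ∈ Finset.Icc 1 t, if A s ω = a then Y s ω else 0) - pulls A a t ω * c := by
  unfold centered pulls
  push_cast
  rw [Finset.sum_mul, ← Finset.sum_sub_distrib]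
  refine Finset.sum_congr rfl fun s _ => ?_
  split_ifs <;> simp

lemma sum_exponent_eq (c l : ℝ) (a : Fin K) (t : ℕ) (ω : Ω) :
    (∑ s ∈ Finset.Icc 1 t, if A s ω = a then l * (Y s ω - c) - l ^ 2 / 8 else 0)
      = l * centered A Y c a t ω - pulls A a t ω * (l ^ 2 / 8) := by
  unfold centered pulls
  push_cast
  rw [Finset.sum_mul, Finset.mul_sum, ← Finset.sum_sub_distrib]
  refine Finset.sum_congr rfl fun s _ => ?_
  split_ifs <;> simp

/-- The confidence interval of arm `a` fails at time `s`. -/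
def confFail (A : ℕ → Ω → Fin K) (Y : ℕ → Ω → ℝ) (μ : Fin K → ℝ) (a : Fin K) (s : ℕ) : Set Ω :=
  {ω | pulls A a s ω ≠ 0 ∧
    Real.sqrt (2 * Real.log s) * Real.sqrt (pulls A a s ω) < |centered A Y (μ a) a s ω|}

/-- The sampling of arm `a` deviates from its conditional probabilities up to time `t`. -/
def armFail (A : ℕ → Ω → Fin K) (p : ℕ → Ω → Fin K → ℝ) (a : Fin K) (t : ℕ) : Set Ω :=
  {ω | 2 * (Real.sqrt (2 * Real.log t) * Real.sqrt t) ≤ ∑ s ∈ Finset.Icc 1 t,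
    weight A a (s - 1) ω * (p s ω a - ({ω | A s ω = a}).indicator (fun _ => (1 : ℝ)) ω)}

/-! ### Failure probabilities -/

/-- A union bound over the value `n` of `N_a(s)` and over the two signs, each case being a Chernoff
bound with parameter `l = ±4 √(2 log s / n)`. -/
lemma measure_confFail_le [MeasurableSpace Ω] (P : Measure Ω) [IsProbabilityMeasure P]
    (ν : Fin K → Measure ℝ) (hνprob : ∀ a, IsProbabilityMeasure (ν a))
    (hνsupp : ∀ a, (ν a) (Set.Icc (0 : ℝ) 1)ᶜ = 0)
    (μ : Fin K → ℝ) (hμ : ∀ a, μ a = ∫ x, x ∂(ν a))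
    (hA : ∀ t, Measurable (A t)) (hY : ∀ t, Measurable (Y t))
    (hreward : ∀ t, 1 ≤ t → ∀ s : Set ℝ, MeasurableSet s →
      (P[({ω | Y t ω ∈ s}).indicator (fun _ => (1 : ℝ)) |
          hist A Y (t - 1) ⊔ MeasurableSpace.comap (A t) inferInstance])
        =ᵐ[P] fun ω => ((ν (A t ω)) s).toReal)
    (a : Fin K) (s : ℕ) (hs : 1 ≤ s) :
    P (confFail A Y μ a s) ≤ ENNReal.ofReal (2 / (s : ℝ) ^ 3) := by
  have hs0 : (0 : ℝ) < s := by exact_mod_cast hs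
  have hlog : 0 ≤ Real.log s := Real.log_natCast_nonneg s
  have chern : ∀ l : ℝ, P {ω | 4 * Real.log s ≤ ∑ r ∈ Finset.Icc 1 s,
      if A r ω = a then l * (Y r ω - μ a) - l ^ 2 / 8 else 0} ≤ ENNReal.ofReal (1 / (s : ℝ) ^ 4) := by
    intro l
    refine (measure_sum_ge_le P (hist A Y) hist_mono (hist_le hA hY)
      (fun r ω => if A r ω = a then l * (Y r ω - μ a) - l ^ 2 / 8 else 0) ?_ ?_ s _).trans
      (le_of_eq ?_)
    · intro r hr
      exact Measurable.ite (measurableSet_arm_hist hr le_rfl a)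
        ((((measurable_reward_hist hr le_rfl).sub_const _).const_mul _).sub_const _)
        measurable_const
    · intro r g hg
      rw [hμ a]
      have hle : hist A Y r ⊔ MeasurableSpace.comap (A (r + 1)) inferInstance ≤ ‹_› :=
        sup_le (hist_le hA hY r) (hA (r + 1)).comap_le
      exact lintegral_reward_step_le hle P ν hνprob hνsupp
        (measurable_iff_comap_le.2 le_sup_right) (hY (r + 1))
        (hreward (r + 1) (by omega)) a l (hg.mono le_sup_left le_rfl)
    · congr 1
      rw [Real.exp_neg, mul_comm, Real.exp_mul, Real.exp_log hs0, one_div]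
      norm_cast
  let l : ℕ → ℝ := fun n => 4 * (Real.sqrt (2 * Real.log s) / Real.sqrt n)
  let B : ℝ → Set Ω := fun l => {ω | 4 * Real.log s ≤ ∑ r ∈ Finset.Icc 1 s,
      if A r ω = a then l * (Y r ω - μ a) - l ^ 2 / 8 else 0}
  have hsub : confFail A Y μ a s ⊆ ⋃ n ∈ Finset.Icc 1 s, (B (l n) ∪ B (-l n)) := by
    intro ω hω
    obtain ⟨h0, h1⟩ := hω
    simp only [Set.mem_iUnion]
    refine ⟨pulls A a s ω, Finset.mem_Icc.2 ⟨Nat.one_le_iff_ne_zero.2 h0, pulls_le a s ω⟩, ?_⟩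
    set n := pulls A a s ω with hn
    have hnpos : (0 : ℝ) < n := by exact_mod_cast Nat.pos_of_ne_zero h0
    set x := Real.sqrt (2 * Real.log s) with hx
    set y := Real.sqrt n with hy
    have hx0 : 0 ≤ x := Real.sqrt_nonneg _
    have hy0 : 0 < y := Real.sqrt_pos.2 hnpos
    have hx2 : x ^ 2 = 2 * Real.log s := Real.sq_sqrt (by positivity)
    have hy2 : y ^ 2 = n := Real.sq_sqrt hnpos.le
    have hq : (n : ℝ) * ((4 * (x / y)) ^ 2 / 8) = 2 * x ^ 2 := by
      rw [← hy2]; field_simp; ring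
    have hbig : ∀ D : ℝ, x * y < D → 4 * x ^ 2 ≤ 4 * (x / y) * D := by
      intro D hD
      have : 4 * (x / y) * (x * y) = 4 * x ^ 2 := by field_simp
      rw [← this]
      gcongr
    rcases lt_abs.1 h1 with h | h
    · left
      simp only [B, Set.mem_ofPred_eq]
      rw [sum_exponent_eq, ← hn]
      have := hbig _ h
      simp only [l]
      rw [hq]
      linarith
    · right
      simp only [B, Set.mem_ofPred_eq]
      rw [sum_exponent_eq, ← hn]
      have := hbig _ h
      simp only [l]
      rw [neg_sq, hq]
      linarith
  calc P (confFail A Y μ a s) ≤ ∑ n ∈ Finset.Icc 1 s, P (B (l n) ∪ B (-l n)) :=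
        (measure_mono hsub).trans (measure_biUnion_finset_le _ _)
    _ ≤ ∑ n ∈ Finset.Icc 1 s, ENNReal.ofReal (2 / (s : ℝ) ^ 4) := by
        refine Finset.sum_le_sum fun n _ => (measure_union_le _ _).trans ?_
        refine (add_le_add (chern _) (chern _)).trans (le_of_eq ?_)
        rw [← ENNReal.ofReal_add (by positivity) (by positivity)]
        congr 1; ring
    _ = ENNReal.ofReal (2 / (s : ℝ) ^ 3) := by
        rw [Finset.sum_const, Nat.card_Icc, nsmul_eq_mul, Nat.add_sub_cancel,
          ← ENNReal.ofReal_natCast, ← ENNReal.ofReal_mul hs0.le]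
        congr 1; field_simp

/-- An Azuma-type bound, with Chernoff parameter `l = √(2 log t) / √t`. -/
lemma measure_armFail_le [MeasurableSpace Ω] (P : Measure Ω) [IsProbabilityMeasure P]
    {p : ℕ → Ω → Fin K → ℝ}
    (hA : ∀ t, Measurable (A t)) (hY : ∀ t, Measurable (Y t))
    (hp0 : ∀ t, 1 ≤ t → ∀ ω a, 0 ≤ p t ω a) (hp1 : ∀ t, 1 ≤ t → ∀ ω a, p t ω a ≤ 1)
    (hpmeas : ∀ t, 1 ≤ t → Measurable[hist A Y (t - 1)] (p t))
    (harm : ∀ t, 1 ≤ t → ∀ a : Fin K,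
      (P[({ω | A t ω = a}).indicator (fun _ => (1 : ℝ)) | hist A Y (t - 1)])
        =ᵐ[P] fun ω => p t ω a)
    (a : Fin K) (t : ℕ) (ht : 1 ≤ t) :
    P (armFail A p a t) ≤ ENNReal.ofReal (1 / (t : ℝ) ^ 2) := by
  have ht0 : (0 : ℝ) < t := by exact_mod_cast ht
  have hlog : 0 ≤ Real.log t := Real.log_natCast_nonneg t
  set x := Real.sqrt (2 * Real.log t) with hx
  set y := Real.sqrt t with hy
  have hx0 : 0 ≤ x := Real.sqrt_nonneg _
  have hy0 : 0 < y := Real.sqrt_pos.2 ht0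
  have hx2 : x ^ 2 = 2 * Real.log t := Real.sq_sqrt (by positivity)
  have hy2 : y ^ 2 = t := Real.sq_sqrt ht0.le
  have hl1 : x / y ≤ 1 := by
    rw [div_le_one hy0]
    refine Real.sqrt_le_sqrt ?_
    have h1 := Real.log_le_sub_one_of_pos (x := (t : ℝ) / 2) (by positivity)
    rw [Real.log_div ht0.ne' two_ne_zero] at h1
    have := Real.log_two_lt_d9
    linarith
  set Z : ℕ → Ω → ℝ := fun s ω => (x / y) * (weight A a (s - 1) ω *
    (p s ω a - ({ω | A s ω = a}).indicator (fun _ => (1 : ℝ)) ω)) - (x / y) ^ 2 with hZ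
  have hpa : ∀ s, 1 ≤ s → Measurable[hist A Y (s - 1)] (fun ω => p s ω a) :=
    fun s hs => (measurable_pi_apply a).comp (hpmeas s hs)
  have hch := measure_sum_ge_le P (hist A Y) hist_mono (hist_le hA hY) Z ?_ ?_ t
    (2 * Real.log t)
  · refine (measure_mono ?_).trans (hch.trans (le_of_eq ?_))
    · intro ω hω
      change 2 * (x * y) ≤ _ at hω
      simp only [hZ, Set.mem_ofPred_eq]
      rw [Finset.sum_sub_distrib, ← Finset.mul_sum, Finset.sum_const, Nat.card_Icc,
        Nat.add_sub_cancel, nsmul_eq_mul]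
      have e1 : x / y * (2 * (x * y)) = 2 * x ^ 2 := by field_simp
      have e2 : (t : ℝ) * (x / y) ^ 2 = x ^ 2 := by rw [← hy2]; field_simp
      have := mul_le_mul_of_nonneg_left hω (show 0 ≤ x / y by positivity)
      rw [e1] at this
      rw [e2]
      linarith
    · congr 1
      rw [Real.exp_neg, mul_comm, Real.exp_mul, Real.exp_log ht0, one_div]
      norm_cast
  · intro s hs
    have hmono : hist A Y (s - 1) ≤ hist A Y s := hist_mono (Nat.sub_le s 1)
    refine Measurable.sub_const (Measurable.const_mul (Measurable.mul ?_ (Measurable.sub ?_ ?_)) _) _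
    · exact (measurable_weight a (s - 1)).mono hmono le_rfl
    · exact (hpa s hs).mono hmono le_rfl
    · exact measurable_const.indicator (measurableSet_arm_hist hs le_rfl a)
  · intro s g hg
    have h1 : 1 ≤ s + 1 := by omega
    exact lintegral_arm_step_le (hist_le hA hY s) P (hA (s + 1) (measurableSet_singleton a))
      (hpa (s + 1) h1) (measurable_weight a s) (fun ω => hp0 _ h1 ω a) (fun ω => hp1 _ h1 ω a)
      (weight_nonneg a s) (weight_le_one a s) (harm (s + 1) h1 a) (by positivity) hl1 hg

/-! ### Deterministic regret analysis -/

/-- Off the failure event, the index of an arm lies within twice the bonus above its mean. For an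
unpulled arm this uses `√(2 log s) ≥ 1`, hence `s ≥ 2`. -/
lemma ucbIndex_bounds {μ : Fin K → ℝ} (a : Fin K) (hμ0 : 0 ≤ μ a) (hμ1 : μ a ≤ 1) {s : ℕ}
    (hs : 2 ≤ s) {ω : Ω} (hω : ω ∉ confFail A Y μ a s) :
    μ a ≤ ucbIndex A Y a s ω ∧
      ucbIndex A Y a s ω ≤ μ a + 2 * Real.sqrt (2 * Real.log s) * weight A a s ω := by
  have hs2 : (2 : ℝ) ≤ s := by exact_mod_cast hs
  have hlog : Real.log 2 ≤ Real.log s := Real.log_le_log two_pos hs2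
  have hl2 := Real.log_two_gt_d9
  have hx1 : 1 ≤ Real.sqrt (2 * Real.log s) := by
    rw [Real.one_le_sqrt]; linarith
  unfold ucbIndex empMean weight
  rw [if_neg (by omega), Real.sqrt_div (by linarith)]
  by_cases h0 : pulls A a s ω = 0
  · simp only [h0, if_true, zero_le, max_eq_right, Nat.cast_one, Real.sqrt_one, div_one, mul_one]
    constructor <;> linarith
  · rw [if_neg h0]
    have hc : |centered A Y (μ a) a s ω|
        ≤ Real.sqrt (2 * Real.log s) * Real.sqrt (pulls A a s ω) := by
      by_contra h
      exact hω ⟨h0, not_le.1 h⟩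
    rw [centered_eq] at hc
    rw [max_eq_left (Nat.one_le_iff_ne_zero.2 h0)]
    set n := pulls A a s ω
    set S := ∑ r ∈ Finset.Icc 1 s, if A r ω = a then Y r ω else 0
    set x := Real.sqrt (2 * Real.log s)
    have hnpos : (0 : ℝ) < n := by exact_mod_cast Nat.pos_of_ne_zero h0
    set y := Real.sqrt n
    have hy0 : 0 < y := Real.sqrt_pos.2 hnpos
    have hy2 : (n : ℝ) = y ^ 2 := (Real.sq_sqrt hnpos.le).symm
    have e : S / n - μ a = (S - n * μ a) / n := by field_simp
    have hd : |S / n - μ a| ≤ x / y := by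
      rw [e, abs_div, abs_of_pos hnpos, div_le_iff₀ hnpos]
      refine hc.trans (le_of_eq ?_)
      rw [hy2]; field_simp
    have := abs_le.1 hd
    have e2 : 2 * x * (1 / y) = x / y + x / y := by ring
    rw [e2]
    constructor <;> linarith

lemma dot_le_of_mem_convexHull {ExtP : Set (Fin K → ℝ)} {U : Fin K → ℝ} {c : ℝ}
    (h : ∀ q ∈ ExtP, dot q U ≤ c) {q : Fin K → ℝ} (hq : q ∈ convexHull ℝ ExtP) : dot q U ≤ c := by
  have hconv : Convex ℝ {q : Fin K → ℝ | dot q U ≤ c} := by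
    refine convex_halfSpace_le ⟨fun x y => ?_, fun r x => ?_⟩ c
    · simp [dot, add_mul, Finset.sum_add_distrib]
    · simp [dot, Finset.mul_sum, mul_assoc]
  exact convexHull_min h hconv hq

lemma nonneg_of_mem_convexHull {ExtP : Set (Fin K → ℝ)}
    (h : ∀ q ∈ ExtP, (∀ a, 0 ≤ q a) ∧ ∑ a, q a = 1) {q : Fin K → ℝ}
    (hq : q ∈ convexHull ℝ ExtP) : (∀ a, 0 ≤ q a) ∧ ∑ a, q a = 1 :=
  convexHull_min (t := stdSimplex ℝ (Fin K)) h (convex_stdSimplex ℝ (Fin K)) hq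

end History

/-- The `O(√t log t)` regret terms are eventually negligible against `Δ t`. -/
lemma eventually_regret_lt (K : ℕ) {Δ : ℝ} (hΔ : 0 < Δ) :
    ∀ᶠ t : ℕ in Filter.atTop,
      1 + 2 * Real.sqrt (2 * Real.log t)
        * (K * (3 * Real.sqrt t + 2 * (Real.sqrt (2 * Real.log t) * Real.sqrt t))) < Δ / 4 * t := by
  have hε : 0 < Δ / (8 * (28 * (K + 1))) := by positivity
  have h1 := (isLittleO_log_rpow_rpow_atTop 2 (show (0 : ℝ) < 1 / 2 by norm_num)).bound hε
  have h1' := tendsto_natCast_atTop_atTop (R := ℝ) |>.eventually h1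
  have h2 := (tendsto_natCast_atTop_atTop (R := ℝ)).eventually_gt_atTop (8 / Δ)
  filter_upwards [h1', h2, Filter.eventually_ge_atTop 3] with t ht ht2 ht3
  have ht3' : (3 : ℝ) ≤ t := by exact_mod_cast ht3
  have hL : 1 ≤ Real.log t := by
    rw [Real.le_log_iff_exp_le (by linarith)]
    linarith [Real.exp_one_lt_d9]
  set L := Real.log t
  set x := Real.sqrt (2 * L)
  have hx0 : 0 ≤ x := Real.sqrt_nonneg _
  have hx2 : x ^ 2 = 2 * L := Real.sq_sqrt (by linarith)
  have hxL : x ≤ 2 * L := by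
    have : 1 ≤ x := by rw [Real.one_le_sqrt]; linarith
    nlinarith
  set y := Real.sqrt t
  have hy0 : 0 ≤ y := Real.sqrt_nonneg _
  have hy2 : y ^ 2 = t := Real.sq_sqrt (by linarith)
  rw [← Real.sqrt_eq_rpow, Real.norm_of_nonneg (Real.sqrt_nonneg _),
    Real.norm_of_nonneg (by positivity), Real.rpow_two] at ht
  change L ^ 2 ≤ _ * y at ht
  have hlhs : 2 * x * (K * (3 * y + 2 * (x * y))) ≤ 28 * (K + 1) * (L ^ 2 * y) := by
    have e : 2 * x * (K * (3 * y + 2 * (x * y))) = K * y * (6 * x + 4 * x ^ 2) := by ring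
    have hb : 6 * x + 4 * x ^ 2 ≤ 28 * L ^ 2 := by
      rw [hx2]; nlinarith
    rw [e]
    calc K * y * (6 * x + 4 * x ^ 2) ≤ K * y * (28 * L ^ 2) := by gcongr
      _ ≤ (K + 1) * y * (28 * L ^ 2) := by gcongr; linarith
      _ = _ := by ring
  have h3 : 28 * (K + 1) * (L ^ 2 * y) ≤ Δ / 8 * t := by
    calc 28 * (K + 1) * (L ^ 2 * y)
        ≤ 28 * (K + 1) * (Δ / (8 * (28 * (K + 1))) * y * y) := by gcongr
      _ = Δ / 8 * y ^ 2 := by field_simp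
      _ = _ := by rw [hy2]
  have h4 : 1 < Δ / 8 * t := by
    rw [div_lt_iff₀ hΔ] at ht2
    linarith
  linarith

/-- **Statement 0** (Theorem 1, Case 1): the diversity-preserving UCB algorithm, run on any
bandit problem over `D_{[0,1]}` with a finite-polytope diversity-preserving set `Pset`, has
regret at most `(24 K (ln(1+T))² + K + 2)/Δ` for every horizon `T ≥ 1`. -/
theorem ucb_regret_general_bound
    {Ω : Type*} [MeasurableSpace Ω] {K : ℕ} (hK : 1 ≤ K)
    (P : Measure Ω) [IsProbabilityMeasure P]
    -- the bandit problem: distributions over [0,1] with means μ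
    (ν : Fin K → Measure ℝ) (hνprob : ∀ a, IsProbabilityMeasure (ν a))
    (hνsupp : ∀ a, (ν a) (Set.Icc (0 : ℝ) 1)ᶜ = 0)
    (μ : Fin K → ℝ) (hμ : ∀ a, μ a = ∫ x, x ∂(ν a))
    -- the diversity-preserving set: a finite polytope of probability vectors
    (ExtP : Finset (Fin K → ℝ)) (hExtNe : ExtP.Nonempty)
    (hExtProb : ∀ p ∈ ExtP, (∀ a, 0 ≤ p a) ∧ ∑ a, p a = 1)
    (Pset : Set (Fin K → ℝ)) (hPset : Pset = convexHull ℝ (ExtP : Set (Fin K → ℝ)))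
    -- optimal value M and minimal positive gap Δ (at least one p ∈ Ext(Pset) has Δ(p) > 0)
    (M : ℝ) (hM : IsGreatest {x | ∃ p ∈ Pset, dot p μ = x} M)
    (Δ : ℝ) (hΔ : IsLeast {x | ∃ p ∈ ExtP, M - dot p μ = x ∧ 0 < x} Δ)
    -- the processes generated by the diversity-preserving UCB algorithm
    (p : ℕ → Ω → Fin K → ℝ) (A : ℕ → Ω → Fin K) (Y : ℕ → Ω → ℝ)
    (hA : ∀ t, Measurable (A t)) (hY : ∀ t, Measurable (Y t))
    (hpmeas : ∀ t, 1 ≤ t → Measurable[hist A Y (t - 1)] (p t))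
    -- UCB action choice: p_t maximizes ⟨·, U(t-1)⟩ over Ext(Pset)
    (hUCB : ∀ t, 1 ≤ t → ∀ ω, p t ω ∈ ExtP ∧
      ∀ q ∈ ExtP, dot q (fun a => ucbIndex A Y a (t - 1) ω)
        ≤ dot (p t ω) (fun a => ucbIndex A Y a (t - 1) ω))
    -- given the past, the arm A_t is drawn according to p_t
    (harm : ∀ t, 1 ≤ t → ∀ a : Fin K,
      (P[({ω | A t ω = a}).indicator (fun _ => (1 : ℝ)) | hist A Y (t - 1)])
        =ᵐ[P] fun ω => p t ω a)
    -- given the past and A_t, the reward Y_t is drawn according to ν_{A_t}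
    (hreward : ∀ t, 1 ≤ t → ∀ s : Set ℝ, MeasurableSet s →
      (P[({ω | Y t ω ∈ s}).indicator (fun _ => (1 : ℝ)) |
          hist A Y (t - 1) ⊔ MeasurableSpace.comap (A t) inferInstance])
        =ᵐ[P] fun ω => ((ν (A t ω)) s).toReal)
    -- `p★_min(ν) > 0`: every optimal mixed action puts positive mass on every arm
    (hpstarmin : ∀ q ∈ Pset, dot q μ = M → ∀ a, 0 < q a)
    -- `p★` is any optimal mixed action
    (pstar : Fin K → ℝ) (hpstar : pstar ∈ Pset ∧ dot pstar μ = M) :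
    ∃ C : ℝ, ∀ t : ℕ, 1 ≤ t →
      (P {ω | Δ * t / 2
          ≤ ∑ s ∈ Finset.Icc 1 t, (dot pstar μ - dot (p s ω) μ)}).toReal
        ≤ C / t ^ 2 := by
  have hΔ0 : 0 < Δ := by
    obtain ⟨_, _, _, h⟩ := hΔ.1
    exact h
  have hμ0 : ∀ a, 0 ≤ μ a := by
    intro a
    rw [hμ a]
    refine integral_nonneg_of_ae ?_
    have hb : ∀ᵐ y ∂(ν a), y ∈ Set.Icc (0 : ℝ) 1 := by rw [ae_iff]; exact hνsupp a
    exact hb.mono fun y hy => hy.1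
  have hμ1 : ∀ a, μ a ≤ 1 := by
    intro a
    have := hνprob a
    have hb : ∀ᵐ y ∂(ν a), y ∈ Set.Icc (0 : ℝ) 1 := by rw [ae_iff]; exact hνsupp a
    rw [hμ a]
    calc ∫ x, x ∂(ν a) ≤ ∫ _, (1 : ℝ) ∂(ν a) :=
          integral_mono_ae (Integrable.of_mem_Icc 0 1 aemeasurable_id hb) (integrable_const _)
            (hb.mono fun y hy => hy.2)
      _ = 1 := by simp
  have hp0 : ∀ t, 1 ≤ t → ∀ ω a, 0 ≤ p t ω a :=
    fun t ht ω a => (hExtProb _ (hUCB t ht ω).1).1 a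
  have hp1 : ∀ t, 1 ≤ t → ∀ ω a, p t ω a ≤ 1 := by
    intro t ht ω a
    rw [← (hExtProb _ (hUCB t ht ω).1).2]
    exact Finset.single_le_sum (fun b _ => hp0 t ht ω b) (Finset.mem_univ a)
  have hpsH : pstar ∈ convexHull ℝ (ExtP : Set (Fin K → ℝ)) := hPset ▸ hpstar.1
  have hps := nonneg_of_mem_convexHull (fun q hq => hExtProb q hq) hpsH
  -- every instantaneous regret is at most `1`
  have hgap1 : ∀ s, 1 ≤ s → ∀ ω, dot pstar μ - dot (p s ω) μ ≤ 1 := by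
    intro s hs ω
    have h1 : dot pstar μ ≤ 1 := by
      rw [← hps.2]
      exact Finset.sum_le_sum fun a _ => mul_le_of_le_one_right (hps.1 a) (hμ1 a)
    have h2 : 0 ≤ dot (p s ω) μ :=
      Finset.sum_nonneg fun a _ => mul_nonneg (hp0 s hs ω a) (hμ0 a)
    linarith
  obtain ⟨t₀, ht₀⟩ := Filter.eventually_atTop.1 (eventually_regret_lt K hΔ0)
  set C₁ : ℝ := 2 * K * (4 / Δ) ^ 3 + K with hC₁
  have hC₁0 : 0 ≤ C₁ := by positivity
  refine ⟨C₁ + (t₀ : ℝ) ^ 2, fun t ht => ?_⟩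
  have htpos : (0 : ℝ) < t := by exact_mod_cast ht
  rcases lt_or_ge t t₀ with hlt | hge
  · -- finitely many horizons: a probability is at most `1`
    have h1 : (P {ω | Δ * t / 2
        ≤ ∑ s ∈ Finset.Icc 1 t, (dot pstar μ - dot (p s ω) μ)}).toReal ≤ 1 :=
      measureReal_le_one
    refine h1.trans ?_
    rw [le_div_iff₀ (by positivity)]
    have : (t : ℝ) ≤ t₀ := by exact_mod_cast hlt.le
    have : (t : ℝ) ^ 2 ≤ (t₀ : ℝ) ^ 2 := by gcongr
    linarith
  have hsmall := ht₀ t hge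
  -- the first `m` rounds are discarded; they cost at most about `Δ t / 4`
  set m : ℕ := ⌈Δ / 4 * t⌉₊ with hm
  have hmlow : Δ / 4 * t ≤ m := Nat.le_ceil _
  have hmup : (m : ℝ) < Δ / 4 * t + 1 := Nat.ceil_lt_add_one (by positivity)
  have hx0 : 0 ≤ Real.sqrt (2 * Real.log t) := Real.sqrt_nonneg _
  have hm2 : 2 ≤ m := by
    have h0 : 0 ≤ 2 * Real.sqrt (2 * Real.log t) * (K * (3 * Real.sqrt t
        + 2 * (Real.sqrt (2 * Real.log t) * Real.sqrt t))) := by positivity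
    have : (1 : ℝ) < m := by linarith
    exact_mod_cast this
  have hm0 : (0 : ℝ) < m := by positivity
  have hsub : {ω | Δ * t / 2 ≤ ∑ s ∈ Finset.Icc 1 t, (dot pstar μ - dot (p s ω) μ)}
      ⊆ (⋃ s ∈ Finset.Icc m t, ⋃ a ∈ (Finset.univ : Finset (Fin K)), confFail A Y μ a s)
        ∪ ⋃ a ∈ (Finset.univ : Finset (Fin K)), armFail A p a t := by
    intro ω hω
    by_contra hgood
    rw [Set.mem_union, not_or] at hgood
    obtain ⟨hg1, hg2⟩ := hgood
    simp only [Set.mem_iUnion, not_exists, Finset.mem_univ, true_implies] at hg1 hg2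
    simp only [Set.mem_ofPred_eq] at hω
    have hround : ∀ r ∈ Finset.Icc 1 t, dot pstar μ - dot (p r ω) μ
        ≤ (if r ≤ m then 1 else 0) + 2 * Real.sqrt (2 * Real.log t)
          * ∑ a, p r ω a * weight A a (r - 1) ω := by
      intro r hr
      rw [Finset.mem_Icc] at hr
      have hnn : 0 ≤ ∑ a, p r ω a * weight A a (r - 1) ω :=
        Finset.sum_nonneg fun a _ => mul_nonneg (hp0 r hr.1 ω a) (weight_nonneg a _ ω)
      split_ifs with hrm
      · have := hgap1 r hr.1 ω
        have : 0 ≤ 2 * Real.sqrt (2 * Real.log t) * ∑ a, p r ω a * weight A a (r - 1) ω := by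
          positivity
        linarith
      · have hrmem : r - 1 ∈ Finset.Icc m t := Finset.mem_Icc.2 ⟨by omega, by omega⟩
        have hb := fun a => ucbIndex_bounds a (hμ0 a) (hμ1 a) (s := r - 1) (by omega)
          (hg1 (r - 1) hrmem a)
        -- optimism: `⟨p★, μ⟩ ≤ ⟨p★, U⟩ ≤ ⟨p_r, U⟩ ≤ ⟨p_r, μ⟩ + ` twice the bonus
        have h1 : dot pstar μ ≤ dot pstar (fun a => ucbIndex A Y a (r - 1) ω) :=
          Finset.sum_le_sum fun a _ => mul_le_mul_of_nonneg_left (hb a).1 (hps.1 a)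
        have h2 := dot_le_of_mem_convexHull (fun q hq => (hUCB r hr.1 ω).2 q hq) hpsH
        have hlogle : Real.sqrt (2 * Real.log (r - 1 : ℕ)) ≤ Real.sqrt (2 * Real.log t) := by
          refine Real.sqrt_le_sqrt (mul_le_mul_of_nonneg_left ?_ two_pos.le)
          refine Real.log_le_log ?_ ?_
          · exact_mod_cast (by omega : 0 < r - 1)
          · exact_mod_cast (by omega : r - 1 ≤ t)
        have h3 : dot (p r ω) (fun a => ucbIndex A Y a (r - 1) ω) ≤ dot (p r ω) μ
            + 2 * Real.sqrt (2 * Real.log t) * ∑ a, p r ω a * weight A a (r - 1) ω := by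
          unfold dot
          rw [Finset.mul_sum, ← Finset.sum_add_distrib]
          refine Finset.sum_le_sum fun a _ => ?_
          have hw := weight_nonneg (A := A) a (r - 1) ω
          have h4 : ucbIndex A Y a (r - 1) ω
              ≤ μ a + 2 * Real.sqrt (2 * Real.log t) * weight A a (r - 1) ω :=
            (hb a).2.trans (by gcongr)
          calc _ ≤ p r ω a * (μ a + 2 * Real.sqrt (2 * Real.log t) * weight A a (r - 1) ω) :=
                mul_le_mul_of_nonneg_left h4 (hp0 r hr.1 ω a)
            _ = _ := by ring
        linarith
    have hsum := Finset.sum_le_sum hround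
    rw [Finset.sum_add_distrib, ← Finset.mul_sum] at hsum
    have hfirst : (∑ r ∈ Finset.Icc 1 t, if r ≤ m then (1 : ℝ) else 0) ≤ m := by
      rw [Finset.sum_boole]
      have : ((Finset.Icc 1 t).filter (fun r => r ≤ m)) ⊆ Finset.Icc 1 m := by
        intro r hr
        rw [Finset.mem_filter, Finset.mem_Icc] at hr
        exact Finset.mem_Icc.2 ⟨hr.1.1, hr.2⟩
      have := Finset.card_le_card this
      rw [Nat.card_Icc, Nat.add_sub_cancel] at this
      exact_mod_cast this
    have hsecond : ∑ r ∈ Finset.Icc 1 t, ∑ a, p r ω a * weight A a (r - 1) ω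
        ≤ K * (3 * Real.sqrt t + 2 * (Real.sqrt (2 * Real.log t) * Real.sqrt t)) := by
      rw [Finset.sum_comm]
      have harm_a : ∀ a ∈ (Finset.univ : Finset (Fin K)),
          ∑ r ∈ Finset.Icc 1 t, p r ω a * weight A a (r - 1) ω
          ≤ 3 * Real.sqrt t + 2 * (Real.sqrt (2 * Real.log t) * Real.sqrt t) := by
        intro a _
        have h1 := hg2 a
        simp only [armFail, Set.mem_ofPred_eq, not_le, mul_sub, Finset.sum_sub_distrib] at h1
        have h2 := sum_weight_le (A := A) a t ω
        have h3 : ∑ r ∈ Finset.Icc 1 t, p r ω a * weight A a (r - 1) ω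
            = ∑ r ∈ Finset.Icc 1 t, weight A a (r - 1) ω * p r ω a :=
          Finset.sum_congr rfl fun r _ => mul_comm _ _
        linarith
      refine (Finset.sum_le_card_nsmul _ _ _ harm_a).trans (le_of_eq ?_)
      rw [Finset.card_univ, Fintype.card_fin, nsmul_eq_mul]
    have := mul_le_mul_of_nonneg_left hsecond
      (show 0 ≤ 2 * Real.sqrt (2 * Real.log t) by positivity)
    linarith
  have hconf : P (⋃ s ∈ Finset.Icc m t, ⋃ a ∈ (Finset.univ : Finset (Fin K)), confFail A Y μ a s)
      ≤ ENNReal.ofReal (2 * K * (4 / Δ) ^ 3 / (t : ℝ) ^ 2) := by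
    have hone : ∀ s ∈ Finset.Icc m t,
        P (⋃ a ∈ (Finset.univ : Finset (Fin K)), confFail A Y μ a s)
        ≤ ENNReal.ofReal (K * (2 / (m : ℝ) ^ 3)) := by
      intro s hs
      rw [Finset.mem_Icc] at hs
      have hms : (m : ℝ) ≤ s := by exact_mod_cast hs.1
      refine (measure_biUnion_finset_le _ _).trans ((Finset.sum_le_card_nsmul _ _
        (ENNReal.ofReal (2 / (m : ℝ) ^ 3)) fun a _ => ?_).trans (le_of_eq ?_))
      · refine (measure_confFail_le P ν hνprob hνsupp μ hμ hA hY hreward a s (by omega)).trans ?_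
        apply ENNReal.ofReal_le_ofReal
        gcongr
      · rw [Finset.card_univ, Fintype.card_fin, nsmul_eq_mul, ENNReal.ofReal_mul (by positivity),
          ENNReal.ofReal_natCast]
    refine (measure_biUnion_finset_le _ _).trans ((Finset.sum_le_card_nsmul _ _ _ hone).trans ?_)
    rw [nsmul_eq_mul, ← ENNReal.ofReal_natCast, ← ENNReal.ofReal_mul (by positivity)]
    apply ENNReal.ofReal_le_ofReal
    have hcard : (((Finset.Icc m t).card : ℕ) : ℝ) ≤ t := by
      rw [Nat.card_Icc]
      exact_mod_cast (by omega : t + 1 - m ≤ t)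
    calc ((Finset.Icc m t).card : ℝ) * (K * (2 / (m : ℝ) ^ 3))
        ≤ t * (K * (2 / (Δ / 4 * t) ^ 3)) := by gcongr
      _ = 2 * K * (4 / Δ) ^ 3 / (t : ℝ) ^ 2 := by field_simp
  have harmP : P (⋃ a ∈ (Finset.univ : Finset (Fin K)), armFail A p a t)
      ≤ ENNReal.ofReal (K / (t : ℝ) ^ 2) := by
    refine (measure_biUnion_finset_le _ _).trans ((Finset.sum_le_card_nsmul _ _ _
      fun a _ => measure_armFail_le P hA hY hp0 hp1 hpmeas harm a t ht).trans (le_of_eq ?_))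
    rw [Finset.card_univ, Fintype.card_fin, nsmul_eq_mul, ← ENNReal.ofReal_natCast,
      ← ENNReal.ofReal_mul (by positivity)]
    congr 1; ring
  have htot : P {ω | Δ * t / 2 ≤ ∑ s ∈ Finset.Icc 1 t, (dot pstar μ - dot (p s ω) μ)}
      ≤ ENNReal.ofReal (C₁ / (t : ℝ) ^ 2) := by
    refine (measure_mono hsub).trans ((measure_union_le _ _).trans
      ((add_le_add hconf harmP).trans (le_of_eq ?_)))
    rw [← ENNReal.ofReal_add (by positivity) (by positivity), hC₁, add_div]
  refine (ENNReal.toReal_le_of_le_ofReal (by positivity) htot).trans ?_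
  gcongr
  linarith [sq_nonneg (t₀ : ℝ)]

end DivBanditUCB
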